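/- arXiv:2512.14378 — 2 statements merged into one kernel-verified Lean document; each statement's English description precedes it below -/
import Mathlib

section
/- Let n ≥ 8 be divisible by 4 and let H be a saturated orthogonal array OA(n,n−1,2,2). Let X be the n × ((n−1)(n−2)/2) two-level design whose columns are exactly the interaction columns of all (n−1 choose 2) unordered pairs of distinct columns of H (the columns of H themselves are not included). Then E(s²)(X) = n(n−4)/(n−3), and X is E(s²)-optimal: E(s²)(X) ≤ E(s²)(Y) for every n × ((n−1)(n−2)/2) balanced two-level design Y. -/
open Finset

/-- The `E(s²)` value of an `n × m` two-level design `X` (columns indexed by `ι`,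
`m = card ι`): the average of the squared off-diagonal entries of `XᵀX`. -/
noncomputable def Es2 {n : ℕ} {ι : Type} [Fintype ι] [DecidableEq ι]
    (X : Fin n → ι → ℚ) : ℚ :=
  (∑ i : ι, ∑ j : ι, if i ≠ j then (∑ r : Fin n, X r i * X r j) ^ 2 else 0) /
    ((Fintype.card ι : ℚ) * ((Fintype.card ι : ℚ) - 1))

/-!
Since `‖XᵀX‖ = ‖XXᵀ‖` in the Frobenius norm, `E(s²)` depends only on the inner products of the
rows. If the columns of `X` have sum `0` and squared length `n`, then `XXᵀ` has trace `nm` and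
entries summing to `0`, so its orthogonal projection onto the line spanned by `nI - J` is
`(m / (n - 1)) (nI - J)`. Pythagoras splits `E(s²)(X)` into a constant depending only on `n` and `m`
and a multiple of the squared distance from `XXᵀ` to that projection. For the interactions of a
saturated array `H` the distance vanishes: bordering `H` by a column of ones gives a Hadamard
matrix, so `HHᵀ = nI - J`, and `2 (XXᵀ)ᵣₛ = (HHᵀ)ᵣₛ² - (n - 1)` turns this into
`XXᵀ = ((n - 2) / 2) (nI - J)`.
-/

open scoped Matrix

section Matrices

variable {ρ ι κ R K : Type*} [Fintype ρ] [Fintype ι] [Fintype κ]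

theorem sum_sq_transpose_mul_self [CommSemiring R] (X : Matrix ρ ι R) :
    ∑ i, ∑ j, (Xᵀ * X) i j ^ 2 = ∑ r, ∑ s, (X * Xᵀ) r s ^ 2 := by
  simp only [sq, ← Matrix.hadamard_apply, Matrix.sum_hadamard_eq, Matrix.transpose_mul,
    Matrix.transpose_transpose]
  rw [Matrix.mul_assoc, Matrix.trace_mul_comm]
  simp only [Matrix.mul_assoc]

/-- The matrix `nI - J` of order `n = card ρ`, with `J` the all-ones matrix: `n` times the
orthogonal projection onto the vectors of sum `0`. The factor `n` avoids division. -/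
def scaledCentering (ρ R : Type*) [Fintype ρ] [DecidableEq ρ] [Ring R] : Matrix ρ ρ R :=
  (Fintype.card ρ : R) • 1 - Matrix.of fun _ _ => 1

theorem scaledCentering_apply [DecidableEq ρ] [Ring R] (r s : ρ) :
    scaledCentering ρ R r s = (if r = s then (Fintype.card ρ : R) else 0) - 1 := by
  simp [scaledCentering, Matrix.one_apply]

theorem sum_sq_sub_smul_scaledCentering [DecidableEq ρ] [CommRing R] {M : Matrix ρ ρ R}
    (hM : ∑ r, ∑ s, M r s = 0) (c : R) :
    ∑ r, ∑ s, (M - c • scaledCentering ρ R) r s ^ 2 =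
      ∑ r, ∑ s, M r s ^ 2 - 2 * c * Fintype.card ρ * M.trace
        + c ^ 2 * Fintype.card ρ ^ 2 * (Fintype.card ρ - 1) := by
  set n : R := (Fintype.card ρ : R) with hn
  have entry (r s : ρ) : (M - c • scaledCentering ρ R) r s ^ 2 =
      M r s ^ 2 + 2 * c * M r s + c ^ 2 +
        if r = s then c ^ 2 * (n ^ 2 - 2 * n) - 2 * c * n * M r s else 0 := by
    rw [Matrix.sub_apply, Matrix.smul_apply, scaledCentering_apply, smul_eq_mul]
    split_ifs <;> ring
  simp only [entry, sum_add_distrib, sum_ite_eq, mem_univ, if_true, sum_sub_distrib, ← mul_sum, hM,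
    sum_const, card_univ, nsmul_eq_mul, ← hn, Matrix.trace, Matrix.diag_apply]
  ring

theorem mul_transpose_self_eq_scaledCentering [DecidableEq ρ] [DecidableEq κ] [Field K] [CharZero K]
    {H : Matrix ρ κ K} (hcard : Fintype.card κ + 1 = Fintype.card ρ)
    (hsum : ∀ j, ∑ r, H r j = 0) (hgram : Hᵀ * H = (Fintype.card ρ : K) • 1) :
    H * Hᵀ = scaledCentering ρ K := by
  set n : K := (Fintype.card ρ : K) with hn
  have hn0 : n ≠ 0 := Nat.cast_ne_zero.2 (by omega)
  let ones : Matrix ρ Unit K := Matrix.of fun _ _ => 1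
  let A : Matrix ρ (Unit ⊕ κ) K := Matrix.fromCols ones H
  have hones : onesᵀ * ones = n • 1 := by
    ext; simp [ones, Matrix.mul_apply, hn]
  have hcross : onesᵀ * H = 0 := by
    ext; simp [ones, Matrix.mul_apply, hsum]
  have hcross' : Hᵀ * ones = 0 := by
    simpa using congrArg Matrix.transpose hcross
  have hA : (n⁻¹ • Aᵀ) * A = 1 := by
    simp [A, Matrix.transpose_fromCols, hones, hcross, hcross', hgram,
      Matrix.fromBlocks_smul, smul_smul, hn0]
  have hA' : A * Aᵀ = n • 1 := by
    rw [Matrix.mul_eq_one_comm_of_card_eq _ _ _ (by simp [← hcard, add_comm]), Matrix.mul_smul,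
      inv_smul_eq_iff₀ hn0] at hA
    exact hA
  have hJ : ones * onesᵀ = Matrix.of fun _ _ => 1 := by
    ext; simp [ones, Matrix.mul_apply]
  rw [Matrix.transpose_fromCols, Matrix.fromCols_mul_fromRows, hJ] at hA'
  exact eq_sub_of_add_eq' hA'

end Matrices

section Pairs

variable {κ R : Type*} [Fintype κ] [LinearOrder κ]

theorem two_mul_sum_lt_pairs [CommRing R] (a : κ → R) :
    2 * ∑ p : {p : κ × κ // p.1 < p.2}, a p.1.1 * a p.1.2 = (∑ j, a j) ^ 2 - ∑ j, a j ^ 2 := by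
  have hlt : ∑ p : {p : κ × κ // p.1 < p.2}, a p.1.1 * a p.1.2 =
      ∑ i, ∑ j, if i < j then a i * a j else 0 := by
    rw [← Fintype.sum_prod_type' (f := fun i j => if i < j then a i * a j else 0), ← sum_filter]
    exact (sum_subtype _ (by simp) fun p : κ × κ => a p.1 * a p.2).symm
  have hgt : ∑ i, ∑ j, (if i < j then a i * a j else 0) =
      ∑ i, ∑ j, if j < i then a i * a j else 0 := by
    rw [sum_comm]
    simp only [mul_comm]
  have hdiag : ∑ j, a j ^ 2 = ∑ i, ∑ j, if i = j then a i * a j else 0 := by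
    simp [sq]
  rw [eq_sub_iff_add_eq, two_mul, hlt]
  nth_rw 2 [hgt]
  rw [hdiag, sq, sum_mul_sum]
  simp only [← sum_add_distrib]
  refine sum_congr rfl fun i _ => sum_congr rfl fun j _ => ?_
  rcases lt_trichotomy i j with h | h | h
  · simp [h, h.not_gt, h.ne]
  · simp [h]
  · simp [h, h.not_gt, h.ne']

theorem card_lt_pairs : Fintype.card {p : κ × κ // p.1 < p.2} = (Fintype.card κ).choose 2 := by
  have h := two_mul_sum_lt_pairs (κ := κ) fun _ => (1 : ℚ)
  simp only [mul_one, one_pow, sum_const, card_univ, nsmul_eq_mul] at h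
  rw [← Nat.cast_inj (R := ℚ), Nat.cast_choose_two]
  linarith

theorem one_lt_choose_two {k : ℕ} (hk : 3 ≤ k) : 1 < k.choose 2 :=
  lt_of_lt_of_le (by decide) (Nat.choose_le_choose 2 hk)

theorem cast_pred_choose_two {K : Type*} [Field K] [CharZero K] {n : ℕ} (hn : 0 < n) :
    ((n - 1).choose 2 : K) = (n - 1) * (n - 2) / 2 := by
  rw [Nat.cast_choose_two, Nat.cast_pred hn]
  ring

end Pairs

section Designs

variable {ρ ι κ R K : Type*}

/-- A two-level design: every entry is `1` or `-1`. -/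
def IsTwoLevel [Ring R] (X : Matrix ρ ι R) : Prop :=
  ∀ r i, X r i = 1 ∨ X r i = -1

/-- A balanced design: every column sums to `0`. No condition is put on the levels. -/
def IsBalanced [Fintype ρ] [Ring R] (X : Matrix ρ ι R) : Prop :=
  ∀ i, ∑ r, X r i = 0

/-- A saturated orthogonal array `OA(n, n - 1, 2, 2)`, with rows `ρ` and columns `κ`. -/
structure IsSaturatedOA [Fintype ρ] [Fintype κ] [Ring R] (H : Matrix ρ κ R) : Prop where
  isTwoLevel : IsTwoLevel H
  isBalanced : IsBalanced H
  orthogonal : ∀ j k, j ≠ k → ∑ r, H r j * H r k = 0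
  card_add_one : Fintype.card κ + 1 = Fintype.card ρ

/-- The design of all two-column interactions of `H`. The order on the columns picks one
representative of each unordered pair. -/
def interactionDesign [LT κ] [Ring R] (H : Matrix ρ κ R) :
    Matrix ρ {p : κ × κ // p.1 < p.2} R :=
  fun r p => H r p.1.1 * H r p.1.2

theorem IsTwoLevel.sq_eq_one [Ring R] {X : Matrix ρ ι R} (hX : IsTwoLevel X) (r : ρ) (i : ι) :
    X r i ^ 2 = 1 := by
  rcases hX r i with h | h <;> simp [h]

theorem IsTwoLevel.sum_sq [Fintype ρ] [Ring R] {X : Matrix ρ ι R} (hX : IsTwoLevel X) (i : ι) :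
    ∑ r, X r i ^ 2 = Fintype.card ρ := by
  simp [hX.sq_eq_one]

theorem isTwoLevel_interactionDesign [LT κ] [CommRing R] {H : Matrix ρ κ R} (hH : IsTwoLevel H) :
    IsTwoLevel (interactionDesign H) := by
  intro r p
  rcases hH r p.1.1 with h | h <;> rcases hH r p.1.2 with h' | h' <;>
    simp [interactionDesign, h, h']

theorem IsBalanced.sum_mul_transpose_self [Fintype ρ] [Fintype ι] [Ring R] {X : Matrix ρ ι R}
    (hX : IsBalanced X) : ∑ r, ∑ s, (X * Xᵀ) r s = 0 := by
  refine sum_eq_zero fun r _ => ?_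
  simp only [Matrix.mul_apply, Matrix.transpose_apply]
  rw [sum_comm]
  simp [← mul_sum, hX _]

theorem two_mul_interactionDesign_mul_transpose_self [Fintype κ] [LinearOrder κ] [CommRing R]
    {H : Matrix ρ κ R} (hH : IsTwoLevel H) (r s : ρ) :
    2 * (interactionDesign H * (interactionDesign H)ᵀ) r s =
      (H * Hᵀ) r s ^ 2 - Fintype.card κ := by
  have h := two_mul_sum_lt_pairs fun j => H r j * H s j
  simp only [mul_pow, hH.sq_eq_one, mul_one, sum_const, card_univ, nsmul_eq_mul] at h
  simpa only [Matrix.mul_apply, Matrix.transpose_apply, interactionDesign,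
    mul_mul_mul_comm] using h

namespace IsSaturatedOA

theorem mul_transpose_self [Fintype ρ] [DecidableEq ρ] [Fintype κ] [Field K] [CharZero K]
    {H : Matrix ρ κ K} (hH : IsSaturatedOA H) : H * Hᵀ = scaledCentering ρ K := by
  classical
  refine mul_transpose_self_eq_scaledCentering hH.card_add_one hH.isBalanced ?_
  ext j k
  rcases eq_or_ne j k with rfl | hjk
  · simp [Matrix.mul_apply, ← sq, hH.isTwoLevel.sum_sq]
  · simp [Matrix.mul_apply, hH.orthogonal j k hjk, hjk]

theorem card_column_pairs [Fintype ρ] [Fintype κ] [LinearOrder κ] [Ring R] {H : Matrix ρ κ R}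
    (hH : IsSaturatedOA H) :
    Fintype.card {p : κ × κ // p.1 < p.2} = (Fintype.card ρ - 1).choose 2 := by
  rw [card_lt_pairs, ← hH.card_add_one, Nat.add_sub_cancel]

theorem isBalanced_interactionDesign [Fintype ρ] [Fintype κ] [Preorder κ] [Ring R]
    {H : Matrix ρ κ R} (hH : IsSaturatedOA H) : IsBalanced (interactionDesign H) :=
  fun p => hH.orthogonal _ _ p.2.ne

theorem interactionDesign_mul_transpose_self [Fintype ρ] [DecidableEq ρ] [Fintype κ] [LinearOrder κ]
    [Field K] [CharZero K] {H : Matrix ρ κ K} (hH : IsSaturatedOA H) :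
    interactionDesign H * (interactionDesign H)ᵀ =
      (((Fintype.card ρ : K) - 2) / 2) • scaledCentering ρ K := by
  ext r s
  have h := two_mul_interactionDesign_mul_transpose_self hH.isTwoLevel r s
  have hκ : (Fintype.card κ : K) = Fintype.card ρ - 1 := by
    rw [← hH.card_add_one]; push_cast; ring
  rw [hH.mul_transpose_self, scaledCentering_apply, hκ] at h
  rw [Matrix.smul_apply, scaledCentering_apply, smul_eq_mul, ← mul_right_inj' (two_ne_zero' K), h]
  split_ifs <;> ring

end IsSaturatedOA

end Designs

section Es2

variable {n : ℕ} {ι : Type} [Fintype ι] [DecidableEq ι] {X : Matrix (Fin n) ι ℚ}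

/-- The lower bound of Nguyen and of Tang and Wu for `E(s²)` over balanced designs with `n` rows and
`m` columns. -/
def es2Bound (n m : ℚ) : ℚ :=
  n ^ 2 * (m - n + 1) / ((n - 1) * (m - 1))

theorem Es2_eq_sum_sq_mul_transpose_self (hsq : ∀ i, ∑ r, X r i ^ 2 = n) :
    Es2 X = (∑ r, ∑ s, (X * Xᵀ) r s ^ 2 - Fintype.card ι * n ^ 2) /
      (Fintype.card ι * (Fintype.card ι - 1)) := by
  have entry (i j : ι) : (if i ≠ j then (∑ r, X r i * X r j) ^ 2 else 0) =
      (Xᵀ * X) i j ^ 2 - if i = j then (n : ℚ) ^ 2 else 0 := by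
    rcases eq_or_ne i j with rfl | hij
    · simp [Matrix.mul_apply, ← sq, hsq]
    · simp [Matrix.mul_apply, hij]
  simp [Es2, entry, ← sum_sq_transpose_mul_self]

theorem Es2_eq_es2Bound_add (hn : 1 < n) (hι : 1 < Fintype.card ι) (hbal : IsBalanced X)
    (hsq : ∀ i, ∑ r, X r i ^ 2 = n) :
    Es2 X = es2Bound n (Fintype.card ι) +
      (∑ r, ∑ s,
        (X * Xᵀ - ((Fintype.card ι : ℚ) / (n - 1)) • scaledCentering (Fin n) ℚ) r s ^ 2) /
      (Fintype.card ι * (Fintype.card ι - 1)) := by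
  have htrace : (X * Xᵀ).trace = Fintype.card ι * n := by
    rw [Matrix.trace_mul_comm]
    simp [Matrix.trace, Matrix.mul_apply, ← sq, hsq]
  rw [Es2_eq_sum_sq_mul_transpose_self hsq,
    sum_sq_sub_smul_scaledCentering hbal.sum_mul_transpose_self, htrace, es2Bound, Fintype.card_fin]
  have hn' : (1 : ℚ) < n := mod_cast hn
  have hι' : (1 : ℚ) < Fintype.card ι := mod_cast hι
  have : (n : ℚ) - 1 ≠ 0 := by linarith
  have : (Fintype.card ι : ℚ) - 1 ≠ 0 := by linarith
  have : (Fintype.card ι : ℚ) ≠ 0 := by linarith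
  field_simp
  ring

theorem es2Bound_le_Es2 (hn : 1 < n) (hι : 1 < Fintype.card ι) (hbal : IsBalanced X)
    (hsq : ∀ i, ∑ r, X r i ^ 2 = n) : es2Bound n (Fintype.card ι) ≤ Es2 X := by
  have hι' : (1 : ℚ) < Fintype.card ι := mod_cast hι
  rw [Es2_eq_es2Bound_add hn hι hbal hsq]
  exact le_add_of_nonneg_right <|
    div_nonneg (by positivity) (mul_nonneg (by positivity) (by linarith))

theorem es2Bound_choose_two (hn : 4 ≤ n) :
    es2Bound n ((n - 1).choose 2) = (n : ℚ) * ((n : ℚ) - 4) / ((n : ℚ) - 3) := by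
  have hn' : (4 : ℚ) ≤ n := mod_cast hn
  have h1 : (n : ℚ) - 1 ≠ 0 := by linarith
  have h3 : (n : ℚ) - 3 ≠ 0 := by linarith
  have hm1 : ((n : ℚ) - 1) * (n - 2) / 2 - 1 = n * (n - 3) / 2 := by ring
  rw [es2Bound, cast_pred_choose_two (by omega), hm1]
  field_simp
  ring

theorem IsSaturatedOA.Es2_interactionDesign {κ : Type} [Fintype κ] [LinearOrder κ]
    {H : Matrix (Fin n) κ ℚ} (hH : IsSaturatedOA H) (hn : 4 ≤ n) :
    Es2 (interactionDesign H) = es2Bound n ((n - 1).choose 2) := by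
  have hn' : (4 : ℚ) ≤ n := mod_cast hn
  have hn1 : (n : ℚ) - 1 ≠ 0 := by linarith
  have hcoeff : ((n - 1).choose 2 : ℚ) / (n - 1) = ((n : ℚ) - 2) / 2 := by
    rw [cast_pred_choose_two (by omega)]
    field_simp
  have hcard : Fintype.card {p : κ × κ // p.1 < p.2} = (n - 1).choose 2 := by
    simpa using hH.card_column_pairs
  have hsq (p) : ∑ r, interactionDesign H r p ^ 2 = n := by
    simpa using (isTwoLevel_interactionDesign hH.isTwoLevel).sum_sq p
  rw [Es2_eq_es2Bound_add (by omega) (hcard ▸ one_lt_choose_two (by omega))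
    hH.isBalanced_interactionDesign hsq, hH.interactionDesign_mul_transpose_self, hcard, hcoeff,
    Fintype.card_fin]
  simp

theorem Es2_optimal_interactions_only_general {κ : Type} [Fintype κ] [LinearOrder κ]
    {H : Matrix (Fin n) κ ℚ} (hH : IsSaturatedOA H) (hn : 4 ≤ n) :
    Es2 (interactionDesign H) = (n : ℚ) * ((n : ℚ) - 4) / ((n : ℚ) - 3) ∧
      ∀ {ι : Type} [Fintype ι] [DecidableEq ι] (Y : Matrix (Fin n) ι ℚ),
        Fintype.card ι = (n - 1).choose 2 → IsBalanced Y → (∀ i, ∑ r, Y r i ^ 2 = n) →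
          Es2 (interactionDesign H) ≤ Es2 Y := by
  refine ⟨(hH.Es2_interactionDesign hn).trans (es2Bound_choose_two hn), ?_⟩
  intro ι _ _ Y hι hbal hsq
  rw [hH.Es2_interactionDesign hn, ← hι]
  exact es2Bound_le_Es2 (by omega) (hι ▸ one_lt_choose_two (by omega)) hbal hsq

end Es2

/-- The `n × ((n-1)(n-2)/2)` design `X` whose columns are exactly the
two-column interaction columns of a saturated `OA(n, n-1, 2, 2)` satisfies
`E(s²)(X) = n(n-4)/(n-3)` and is `E(s²)`-optimal among all balanced
`n × ((n-1)(n-2)/2)` two-level designs. -/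
theorem Es2_optimal_interactions_only (n : ℕ) (hn : 8 ≤ n) (h4 : 4 ∣ n)
    (H : Fin n → Fin (n - 1) → ℚ)
    (hpm : ∀ i j, H i j = 1 ∨ H i j = -1)
    (hbal : ∀ j, ∑ i : Fin n, H i j = 0)
    (horth : ∀ j k : Fin (n - 1), j ≠ k → ∑ i : Fin n, H i j * H i k = 0)
    (X : Fin n → {p : Fin (n - 1) × Fin (n - 1) // p.1 < p.2} → ℚ)
    (hX : ∀ r p, X r p = H r p.1.1 * H r p.1.2) :
    Es2 X = (n : ℚ) * ((n : ℚ) - 4) / ((n : ℚ) - 3) ∧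
      ∀ Y : Fin n → Fin ((n - 1) * (n - 2) / 2) → ℚ,
        (∀ i j, Y i j = 1 ∨ Y i j = -1) → (∀ j, ∑ i : Fin n, Y i j = 0) →
          Es2 X ≤ Es2 Y := by
  obtain rfl : X = interactionDesign H := funext₂ hX
  have hH : IsSaturatedOA H := ⟨hpm, hbal, horth, by simp; omega⟩
  obtain ⟨hvalue, hoptimal⟩ := Es2_optimal_interactions_only_general hH (by omega)
  refine ⟨hvalue, fun Y hY hYbal => hoptimal Y ?_ hYbal fun i => ?_⟩
  · simp [Nat.choose_two_right, Nat.sub_sub]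
  · simpa using IsTwoLevel.sum_sq hY i
end

section
/- Let n ≥ 12 be divisible by 4, let H be a saturated orthogonal array OA(n,n−1,2,2), let H' be the n×(n−3) design obtained from H by deleting two distinct fixed columns a and b, and let c_{i₀} be a fixed column of H'. Let d be the nonnegative integer with 4d = #{rows i : a_i·b_i·(c_{i₀})_i = +1}. Let X be the n × (2n−7) two-level design whose columns are the n−3 columns of H' together with the n−4 interaction columns of c_{i₀} with each other column of H'. Then E(s²)(X) = (n³ − 4n² − 32nd + 128d²)/((2n−7)(n−4)). -/
open Finset

/-!
Within the columns of an orthogonal array, and within the interaction columns of a single parent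
`c`, everything is orthogonal, so only the inner products `jChar H c j k` of a column `j` with an
interaction `c * k` contribute to `E(s²)`. If the array is saturated, its columns and the constant
column form an orthogonal basis, and Parseval's identity shows that each row of the symmetric matrix
`jChar H c j k ^ 2`, except the zero row `j = c`, has sum `n ^ 2`. The sum over the kept columns
then follows from the sum over the deleted ones, which for two deleted columns involves a single
value of `jChar`.
-/

section LinearAlgebra

open Matrix

variable {m n K : Type*} [Fintype m] [Fintype n] [DecidableEq m]

theorem mul_transpose_eq_smul_one_of_transpose_mul [DecidableEq n] [Field K]
    {M : Matrix m n K} {c : K} (hc : c ≠ 0) (hcard : Fintype.card m = Fintype.card n)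
    (h : Mᵀ * M = c • 1) :
    M * Mᵀ = c • 1 := by
  have hleft : (c⁻¹ • Mᵀ) * M = 1 := by rw [Matrix.smul_mul, h, inv_smul_smul₀ hc]
  have hright : M * (c⁻¹ • Mᵀ) = 1 := (mul_eq_one_comm_of_card_eq _ _ _ hcard.symm).mp hleft
  rw [← hright, Matrix.mul_smul, smul_inv_smul₀ hc]

theorem sum_sq_vecMul_of_mul_transpose [CommSemiring K] {M : Matrix m n K} {c : K}
    (h : M * Mᵀ = c • 1) (v : m → K) :
    ∑ j, (v ᵥ* M) j ^ 2 = c * ∑ i, v i ^ 2 := by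
  calc ∑ j, (v ᵥ* M) j ^ 2 = v ᵥ* M ⬝ᵥ v ᵥ* M := by simp only [dotProduct, sq]
    _ = v ⬝ᵥ (M * Mᵀ) *ᵥ v := by rw [← mulVec_mulVec, mulVec_transpose, dotProduct_mulVec]
    _ = c * ∑ i, v i ^ 2 := by
      rw [h, smul_mulVec, one_mulVec, dotProduct_smul, smul_eq_mul]; simp only [dotProduct, sq]

end LinearAlgebra

theorem sum_compl_sum_compl_of_symm {ι M : Type*} [Fintype ι] [DecidableEq ι] [AddCommGroup M]
    {f : ι → ι → M} (hf : ∀ i j, f i j = f j i) (s : Finset ι) :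
    ∑ i ∈ sᶜ, ∑ j ∈ sᶜ, f i j =
      ∑ i, ∑ j, f i j - 2 • ∑ i ∈ s, ∑ j, f i j + ∑ i ∈ s, ∑ j ∈ s, f i j := by
  have hcross : ∑ i ∈ sᶜ, ∑ j ∈ s, f i j = ∑ i ∈ s, ∑ j ∈ sᶜ, f i j := by
    rw [sum_comm]
    exact sum_congr rfl fun i _ => sum_congr rfl fun j _ => hf j i
  simp only [← sum_add_sum_compl s, sum_add_distrib, hcross]
  abel

theorem sum_eq_two_mul_card_filter_sub_card {α K : Type*} [Fintype α] [Ring K] [DecidableEq K]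
    {f : α → K} (hf : ∀ r, f r = 1 ∨ f r = -1) :
    ∑ r, f r = 2 * (#{r | f r = 1} : K) - Fintype.card α := by
  have hindicator (r : α) : f r = 2 * (if f r = 1 then 1 else 0) - 1 := by
    split_ifs with h
    · rw [h]; norm_num
    · rw [(hf r).resolve_left h]; norm_num
  rw [sum_congr rfl fun r _ => hindicator r, sum_sub_distrib, ← mul_sum, sum_boole]
  simp

section OrthogonalArray

variable {α ι K : Type*} [Fintype α]

/-- A two-level orthogonal array of strength two, with runs (rows) indexed by `α` and factors
(columns) indexed by `ι`. It is saturated when `card ι + 1 = card α`. -/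
structure IsOrthogonalArray [Ring K] (H : α → ι → K) : Prop where
  two_level : ∀ r j, H r j = 1 ∨ H r j = -1
  balanced : ∀ j, ∑ r, H r j = 0
  orthogonal : ∀ j k, j ≠ k → ∑ r, H r j * H r k = 0

/-- The `J₃`-characteristic of the columns `i, j, k` of a design: the inner product of any one of
them with the interaction column of the other two. -/
def jChar [NonUnitalNonAssocSemiring K] (H : α → ι → K) (i j k : ι) : K :=
  ∑ r, H r i * H r j * H r k

/-- The design `H` with a constant column of ones, indexed by `none`, adjoined. For a saturated
orthogonal array this is a Hadamard matrix. -/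
def withConstant [One K] (H : α → ι → K) : Matrix α (Option ι) K :=
  Matrix.of fun r j => j.elim 1 (H r)

theorem jChar_rotate [CommSemiring K] (H : α → ι → K) (i j k : ι) : jChar H i j k = jChar H j k i :=
  sum_congr rfl fun _ _ => by ring

theorem jChar_right_comm [CommSemiring K] (H : α → ι → K) (i j k : ι) :
    jChar H i j k = jChar H i k j :=
  sum_congr rfl fun _ _ => by ring

namespace IsOrthogonalArray

section Ring

variable [Ring K] {H : α → ι → K}

theorem mul_self (hH : IsOrthogonalArray H) (r : α) (j : ι) : H r j * H r j = 1 := by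
  rcases hH.two_level r j with h | h <;> simp [h]

theorem comp_injective {κ : Type*} (hH : IsOrthogonalArray H) {e : κ → ι}
    (he : Function.Injective e) : IsOrthogonalArray fun r j => H r (e j) where
  two_level r j := hH.two_level r (e j)
  balanced j := hH.balanced (e j)
  orthogonal j k hjk := hH.orthogonal (e j) (e k) (he.ne hjk)

theorem jChar_self_left (hH : IsOrthogonalArray H) (i j : ι) : jChar H i i j = 0 := by
  simp only [jChar, hH.mul_self, one_mul, hH.balanced]

theorem jChar_eq_two_mul_card_sub [DecidableEq K] (hH : IsOrthogonalArray H) (i j k : ι) :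
    jChar H i j k = 2 * (#{r | H r i * H r j * H r k = 1} : K) - Fintype.card α :=
  sum_eq_two_mul_card_filter_sub_card fun r => by
    rcases hH.two_level r i with hi | hi <;> rcases hH.two_level r j with hj | hj <;>
      rcases hH.two_level r k with hk | hk <;> simp [hi, hj, hk]

theorem withConstant_transpose_mul_self [DecidableEq ι] (hH : IsOrthogonalArray H) :
    (withConstant H).transpose * withConstant H = (Fintype.card α : K) • 1 := by
  ext (_ | j) (_ | k)
  · simp [withConstant, Matrix.mul_apply]
  · simp [withConstant, Matrix.mul_apply, hH.balanced]
  · simp [withConstant, Matrix.mul_apply, hH.balanced]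
  · obtain rfl | hjk := eq_or_ne j k
    · simp [withConstant, Matrix.mul_apply, hH.mul_self]
    · simp [withConstant, Matrix.mul_apply, hH.orthogonal j k hjk, hjk]

end Ring

section Saturated

open Matrix

variable [Fintype ι] [Field K] [CharZero K] {H : α → ι → K}

theorem sum_sq_sum_mul (hH : IsOrthogonalArray H) (hsat : Fintype.card ι + 1 = Fintype.card α)
    (v : α → K) :
    ∑ j, (∑ r, v r * H r j) ^ 2 = Fintype.card α * ∑ r, v r ^ 2 - (∑ r, v r) ^ 2 := by
  classical
  have hcard : (Fintype.card α : K) ≠ 0 := Nat.cast_ne_zero.mpr (by omega)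
  have hparseval := sum_sq_vecMul_of_mul_transpose
    (mul_transpose_eq_smul_one_of_transpose_mul hcard (by simp [hsat])
      hH.withConstant_transpose_mul_self) v
  simp only [Fintype.sum_option, vecMul, dotProduct, withConstant, of_apply, Option.elim,
    mul_one] at hparseval
  exact eq_sub_of_add_eq' hparseval

theorem sum_jChar_sq (hH : IsOrthogonalArray H) (hsat : Fintype.card ι + 1 = Fintype.card α)
    {i j : ι} (hij : i ≠ j) : ∑ k, jChar H i j k ^ 2 = (Fintype.card α : K) ^ 2 := by
  have hsq (r : α) : (H r i * H r j) ^ 2 = 1 := by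
    rw [mul_pow, sq, sq, hH.mul_self, hH.mul_self, one_mul]
  simp only [jChar, hH.sum_sq_sum_mul hsat, hsq, hH.orthogonal i j hij]
  simp [sq]

theorem sum_sum_compl_jChar_sq [DecidableEq ι] (hH : IsOrthogonalArray H)
    (hsat : Fintype.card ι + 1 = Fintype.card α) {i : ι} {s : Finset ι} (hi : i ∉ s) :
    ∑ j ∈ sᶜ, ∑ k ∈ sᶜ, jChar H i j k ^ 2 =
      (Fintype.card α - 2 - 2 * #s) * (Fintype.card α : K) ^ 2
        + ∑ j ∈ s, ∑ k ∈ s, jChar H i j k ^ 2 := by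
  have hrow {t : Finset ι} (ht : i ∉ t) :
      ∑ j ∈ t, ∑ k, jChar H i j k ^ 2 = #t * (Fintype.card α : K) ^ 2 := by
    rw [sum_congr rfl fun j hj => hH.sum_jChar_sq hsat (ne_of_mem_of_not_mem hj ht).symm,
      sum_const, nsmul_eq_mul]
  have htotal : ∑ j, ∑ k, jChar H i j k ^ 2
      = (Fintype.card α - 2) * (Fintype.card α : K) ^ 2 := by
    rw [← sum_erase univ (a := i) (by simp [hH.jChar_self_left]), hrow (notMem_erase i univ),
      cast_card_erase_of_mem (mem_univ i), card_univ, ← hsat]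
    push_cast
    ring
  rw [sum_compl_sum_compl_of_symm fun j k => by rw [jChar_right_comm], htotal, hrow hi]
  ring

end Saturated

end IsOrthogonalArray

/-- The one-parent design: the columns of `H` together with the interaction columns of the parent
`i` with each other column of `H`. -/
def withInteractions [Mul K] (H : α → ι → K) (i : ι) : α → ι ⊕ {j // j ≠ i} → K :=
  fun r => Sum.elim (H r) fun j => H r i * H r j

theorem sum_withInteractions_inl_mul_inr [CommSemiring K] (H : α → ι → K) (i j : ι)
    (k : {k // k ≠ i}) :
    ∑ r, withInteractions H i r (.inl j) * withInteractions H i r (.inr k) = jChar H i j k :=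
  sum_congr rfl fun r _ => by simp only [withInteractions, Sum.elim_inl, Sum.elim_inr]; ring

theorem IsOrthogonalArray.sum_withInteractions_inr_mul_inr [CommRing K] {H : α → ι → K}
    (hH : IsOrthogonalArray H) (i : ι) {j k : {k // k ≠ i}} (hjk : j ≠ k) :
    ∑ r, withInteractions H i r (.inr j) * withInteractions H i r (.inr k) = 0 := by
  simp only [withInteractions, Sum.elim_inr, mul_mul_mul_comm, hH.mul_self, one_mul]
  exact hH.orthogonal j k (Subtype.coe_ne_coe.mpr hjk)

theorem IsOrthogonalArray.sum_offDiag_sq_withInteractions [Fintype ι] [DecidableEq ι] [CommRing K]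
    {H : α → ι → K} (hH : IsOrthogonalArray H) (i : ι) :
    (∑ x, ∑ y, if x ≠ y
      then (∑ r, withInteractions H i r x * withInteractions H i r y) ^ 2 else 0) =
      2 * ∑ j, ∑ k, jChar H i j k ^ 2 := by
  have hdrop (j : ι) :
      ∑ k : {k // k ≠ i}, jChar H i j k ^ 2 = ∑ k, jChar H i j k ^ 2 := by
    simp [Fintype.sum_eq_add_sum_subtype_ne _ i, jChar_right_comm H i j i, hH.jChar_self_left]
  have hinl (j k : ι) : (if j = k then 0 else
      (∑ r, withInteractions H i r (.inl j) * withInteractions H i r (.inl k)) ^ 2) = 0 :=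
    ite_eq_left_iff.mpr fun hjk =>
      (congrArg (· ^ 2) (hH.orthogonal j k hjk)).trans (zero_pow two_ne_zero)
  have hinr (j k : {k // k ≠ i}) : (if j = k then 0 else
      (∑ r, withInteractions H i r (.inr j) * withInteractions H i r (.inr k)) ^ 2) = 0 :=
    ite_eq_left_iff.mpr fun hjk =>
      by rw [hH.sum_withInteractions_inr_mul_inr i hjk, zero_pow two_ne_zero]
  have hswap (k : {k // k ≠ i}) (j : ι) :
      ∑ r, withInteractions H i r (.inr k) * withInteractions H i r (.inl j) = jChar H i j k := by
    simp only [mul_comm, ← sum_withInteractions_inl_mul_inr]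
  simp only [Fintype.sum_sum_type, ite_not, Sum.inl.injEq, Sum.inr.injEq, reduceCtorEq, if_false,
    sum_add_distrib, hinl, hinr, hswap, sum_withInteractions_inl_mul_inr, hdrop, sum_const_zero]
  rw [sum_comm (s := univ (α := {k // k ≠ i}))]
  simp only [hdrop]
  ring

end OrthogonalArray

section Es2

variable {n : ℕ} {C : Type} [Fintype C] [DecidableEq C] {H : Fin n → C → ℚ}

theorem Es2_withInteractions (hH : IsOrthogonalArray H) (i : C) :
    Es2 (withInteractions H i) = (∑ j, ∑ k, jChar H i j k ^ 2) /
      ((2 * Fintype.card C - 1) * (Fintype.card C - 1)) := by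
  have hcard : (Fintype.card {j // j ≠ i} : ℚ) = Fintype.card C - 1 := by
    simp [Fintype.card_subtype_compl, Nat.cast_sub (Fintype.card_pos_iff.mpr ⟨i⟩)]
  rw [Es2, hH.sum_offDiag_sq_withInteractions, Fintype.card_sum, Nat.cast_add, hcard,
    ← mul_div_mul_left (∑ j, ∑ k, jChar H i j k ^ 2) _ (two_ne_zero' ℚ)]
  congr 1
  ring

theorem Es2_withInteractions_delete (hH : IsOrthogonalArray H) (hsat : Fintype.card C + 1 = n)
    (s : Finset C) {p : C → Prop} [DecidablePred p] (hp : ∀ j, p j ↔ j ∉ s) (i : {j // p j}) :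
    Es2 (withInteractions (fun r (j : {j // p j}) => H r j) i) =
      ((n - 2 - 2 * #s) * (n : ℚ) ^ 2 + ∑ j ∈ s, ∑ k ∈ s, jChar H i j k ^ 2) /
        ((2 * n - 2 * #s - 3) * (n - #s - 2)) := by
  have hmem (j : C) : j ∈ sᶜ ↔ p j := by rw [mem_compl, hp]
  have hcard : (Fintype.card {j // p j} : ℚ) = n - 1 - #s := by
    rw [Fintype.card_of_subtype sᶜ hmem, card_compl, Nat.cast_sub (card_le_univ s), ← hsat]
    push_cast
    ring
  have hkept : ∑ j : {j // p j}, ∑ k : {j // p j}, jChar H i j k ^ 2 =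
      ∑ j ∈ sᶜ, ∑ k ∈ sᶜ, jChar H i j k ^ 2 := by
    simp only [sum_subtype sᶜ hmem]
  have hsum := hH.sum_sum_compl_jChar_sq (by rw [hsat, Fintype.card_fin]) ((hp i).mp i.2)
  rw [Fintype.card_fin] at hsum
  rw [Es2_withInteractions (hH.comp_injective Subtype.val_injective), hcard, ← hsum, ← hkept]
  congr 1
  ring

theorem Es2_one_parent_delete_two_general (hn : 4 < n) (hsat : Fintype.card C + 1 = n)
    (hH : IsOrthogonalArray H) {a b : C} (hab : a ≠ b) (i : {j // j ≠ a ∧ j ≠ b}) {d : ℕ}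
    (hd : 4 * d = #{r | H r a * H r b * H r i = 1}) :
    Es2 (withInteractions (fun r (j : {j // j ≠ a ∧ j ≠ b}) => H r j) i) =
      ((n : ℚ) ^ 3 - 4 * (n : ℚ) ^ 2 - 32 * n * d + 128 * (d : ℚ) ^ 2) /
        ((2 * n - 7) * (n - 4)) := by
  have hJ : jChar H i a b = 8 * d - n := by
    rw [jChar_rotate, hH.jChar_eq_two_mul_card_sub, ← hd, Fintype.card_fin]
    push_cast
    ring
  have hdeleted : ∑ j ∈ {a, b}, ∑ k ∈ {a, b}, jChar H i j k ^ 2 = 2 * (8 * d - n : ℚ) ^ 2 := by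
    have hdiag (j : C) : jChar H i j j = 0 := by rw [jChar_rotate, hH.jChar_self_left]
    simp only [sum_pair hab, hdiag, jChar_right_comm H i b a, hJ]
    ring
  have hn' : (4 : ℚ) < n := by exact_mod_cast hn
  have hden : (2 * n - 7 : ℚ) * (n - 4) ≠ 0 :=
    mul_ne_zero (by linarith) (sub_ne_zero.mpr hn'.ne')
  have hden_eq : (2 * n - 2 * (2 : ℕ) - 3 : ℚ) * (n - (2 : ℕ) - 2) = (2 * n - 7) * (n - 4) := by
    push_cast
    ring
  rw [Es2_withInteractions_delete hH hsat {a, b} (by simp), hdeleted, card_pair hab, hden_eq,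
    div_left_inj' hden]
  push_cast
  ring

end Es2

/-- Let `H'` be a saturated `OA(n, n-1, 2, 2)` with two distinct fixed
columns `a, b` deleted, let `c_{i₀}` be a fixed column of `H'`, and let `4d` be the
number of rows `i` with `aᵢ·bᵢ·(c_{i₀})ᵢ = +1`. Augmenting `H'` with the `n-4`
interaction columns of `c_{i₀}` with each other column of `H'` yields an
`n × (2n-7)` design `X` with `E(s²)(X) = (n³ - 4n² - 32nd + 128d²)/((2n-7)(n-4))`. -/
theorem Es2_one_parent_delete_two (n : ℕ) (hn : 12 ≤ n) (h4 : 4 ∣ n)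
    (H : Fin n → Fin (n - 1) → ℚ)
    (hpm : ∀ i j, H i j = 1 ∨ H i j = -1)
    (hbal : ∀ j, ∑ i : Fin n, H i j = 0)
    (horth : ∀ j k : Fin (n - 1), j ≠ k → ∑ i : Fin n, H i j * H i k = 0)
    (a b : Fin (n - 1)) (hab : a ≠ b)
    (i0 : {j : Fin (n - 1) // j ≠ a ∧ j ≠ b})
    (d : ℕ)
    (hd : 4 * d =
      ((Finset.univ : Finset (Fin n)).filter (fun i => H i a * H i b * H i i0.1 = 1)).card)
    (X : Fin n → ({j : Fin (n - 1) // j ≠ a ∧ j ≠ b} ⊕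
      {j : {j : Fin (n - 1) // j ≠ a ∧ j ≠ b} // j ≠ i0}) → ℚ)
    (hX : ∀ r, X r = Sum.elim (fun j => H r j.1) (fun j => H r i0.1 * H r j.1.1)) :
    Es2 X = ((n : ℚ) ^ 3 - 4 * (n : ℚ) ^ 2 - 32 * (n : ℚ) * (d : ℚ)
        + 128 * (d : ℚ) ^ 2) / ((2 * (n : ℚ) - 7) * ((n : ℚ) - 4)) := by
  rw [show X = withInteractions (fun r j => H r j.1) i0 from funext hX]
  exact Es2_one_parent_delete_two_general (by omega) (by rw [Fintype.card_fin]; omega)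
    ⟨hpm, hbal, horth⟩ hab i0 hd
end
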